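/- Let μ, ν be Borel probability measures on ℝ with finite first moments. Then μ and ν are in convex order (μ ≼_c ν) if and only if ∫₀¹ g(u)·(F_ν^{-1}(u) − F_μ^{-1}(u)) du ≥ 0 for every bounded, nondecreasing, left-continuous function g : (0,1) → ℝ. -/

import Mathlib

open MeasureTheory

noncomputable section

/-- The quantile function `F_α⁻¹(u) = inf { y : α((-∞, y]) ≥ u }`. -/
def quantile (α : Measure ℝ) (u : ℝ) : ℝ :=
  sInf {y : ℝ | ENNReal.ofReal u ≤ α (Set.Iic y)}

/-- Convex order on `ℝ`: `∫ f dμ ≤ ∫ f dν` for all convex `f` integrable w.r.t. both. -/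
def ConvexOrder (μ ν : Measure ℝ) : Prop :=
  ∀ f : ℝ → ℝ, ConvexOn ℝ Set.univ f →
    Integrable f μ → Integrable f ν → ∫ x, f x ∂μ ≤ ∫ x, f x ∂ν

/-!
Both measures are images of the uniform law on `(0, 1)` under their quantile functions `qμ`, `qν`,
so `∫ f dν - ∫ f dμ` is the integral of `f ∘ qν - f ∘ qμ`. If `f` is convex with subgradients
`a` at `qμ u` and `b` at `qν u`, this integrand lies between `a * (qν u - qμ u)` and
`b * (qν u - qμ u)`.

Given a monotone `g`, the primitive `f` of `g ∘ F_ν` is convex and has subgradient `g u` at `qν u`,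
so the upper bound shows that the convex order implies the integral condition. Given a convex `f`
with a left-continuous selection `s` of subgradients, the lower bound gives the converse, once
`s ∘ qμ` is truncated to a bounded function and the truncation is removed by dominated convergence.
-/

open Set Filter Topology ProbabilityTheory

section Subgradient

/-- `c` is a subgradient of `f : ℝ → ℝ` at `x`: the line of slope `c` through `(x, f x)` lies below
the graph of `f` everywhere. No convexity is assumed. -/
def IsSubgradientAt (f : ℝ → ℝ) (c x : ℝ) : Prop :=
  ∀ y, c * (y - x) ≤ f y - f x

variable {f h s : ℝ → ℝ} {c x : ℝ}

theorem convexOn_of_forall_isSubgradientAt (hs : ∀ x, IsSubgradientAt f (s x) x) :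
    ConvexOn ℝ univ f := by
  refine ⟨convex_univ, fun x _ y _ a b ha hb hab => ?_⟩
  simp only [smul_eq_mul]
  set z := a * x + b * y
  have h_combine : a * (s z * (x - z)) + b * (s z * (y - z)) ≤ a * (f x - f z) + b * (f y - f z) :=
    add_le_add (mul_le_mul_of_nonneg_left (hs z x) ha) (mul_le_mul_of_nonneg_left (hs z y) hb)
  have h_cancel : a * (s z * (x - z)) + b * (s z * (y - z)) = 0 := by
    linear_combination -(s z * z) * hab
  linear_combination h_combine - h_cancel - f z * hab

theorem isSubgradientAt_rightDeriv (hf : ConvexOn ℝ univ f) (x : ℝ) :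
    IsSubgradientAt f (derivWithin f (Ioi x) x) x := by
  have hx : x ∈ interior (univ : Set ℝ) := by simp
  intro y
  rcases lt_trichotomy x y with hxy | rfl | hyx
  · have h_slope := hf.rightDeriv_le_slope_of_mem_interior hx (mem_univ y) hxy
    rwa [slope_def_field, le_div_iff₀ (sub_pos.2 hxy)] at h_slope
  · simp
  · have h_slope := (hf.slope_le_leftDeriv_of_mem_interior (mem_univ y) hx hyx).trans
      (hf.leftDeriv_le_rightDeriv_of_mem_interior hx)
    rw [slope_def_field, div_le_iff₀ (sub_pos.2 hyx)] at h_slope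
    linarith

theorem isSubgradientAt_leftLim (hf : Continuous f) (hs_mono : Monotone s)
    (hs : ∀ x, IsSubgradientAt f (s x) x) (x : ℝ) :
    IsSubgradientAt f (Function.leftLim s x) x := by
  intro y
  have h_id : Tendsto (fun z : ℝ => z) (𝓝[<] x) (𝓝 x) := tendsto_id.mono_left nhdsWithin_le_nhds
  exact le_of_tendsto_of_tendsto' ((hs_mono.tendsto_leftLim x).mul (h_id.const_sub y))
    (((hf.tendsto x).comp h_id).const_sub (f y)) fun z => hs z y

theorem exists_monotone_leftContinuous_isSubgradientAt (hf : ConvexOn ℝ univ f) :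
    ∃ s : ℝ → ℝ, Monotone s ∧ (∀ x, ContinuousWithinAt s (Iic x) x) ∧
      ∀ x, IsSubgradientAt f (s x) x := by
  have h_mono : Monotone fun x => derivWithin f (Ioi x) x := fun x y hxy =>
    hf.monotoneOn_rightDeriv (by simp) (by simp) hxy
  have h_cont : Continuous f := continuousOn_univ.1 (hf.continuousOn isOpen_univ)
  exact ⟨_, h_mono.leftLim, fun x => continuousWithinAt_leftLim_Iic (h_mono.tendsto_leftLim x),
    isSubgradientAt_leftLim h_cont h_mono (isSubgradientAt_rightDeriv hf)⟩

theorem isSubgradientAt_primitive {a : ℝ} (hh : ∀ a b, IntervalIntegrable h volume a b)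
    (h_left : ∀ t < x, h t ≤ c) (h_right : ∀ t > x, c ≤ h t) :
    IsSubgradientAt (fun y => ∫ t in a..y, h t) c x := by
  intro y
  simp only [intervalIntegral.integral_interval_sub_left (hh a y) (hh a x)]
  rcases le_total x y with hxy | hyx
  · calc c * (y - x) = ∫ _ in x..y, c := by
          rw [intervalIntegral.integral_const, smul_eq_mul, mul_comm]
      _ ≤ ∫ t in x..y, h t := intervalIntegral.integral_mono_on_of_le_Ioo hxy
          intervalIntegrable_const (hh x y) fun t ht => h_right t ht.1
  · have h_le : ∫ t in y..x, h t ≤ ∫ _ in y..x, c :=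
      intervalIntegral.integral_mono_on_of_le_Ioo hyx (hh y x) intervalIntegrable_const
        fun t ht => h_left t ht.2
    rw [intervalIntegral.integral_const, smul_eq_mul] at h_le
    rw [intervalIntegral.integral_symm]
    linarith

theorem convexOn_primitive_of_monotone (hh : Monotone h) (a : ℝ) :
    ConvexOn ℝ univ fun y => ∫ t in a..y, h t :=
  convexOn_of_forall_isSubgradientAt fun _ =>
    isSubgradientAt_primitive (fun _ _ => hh.intervalIntegrable)
      (fun _ ht => hh ht.le) fun _ ht => hh ht.le

theorem integrable_primitive_of_bounded {μ : Measure ℝ} {M : ℝ}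
    (hμ : Integrable (fun x => |x|) μ) (hh : ∀ a b, IntervalIntegrable h volume a b)
    (hM : ∀ t, |h t| ≤ M) : Integrable (fun x => ∫ t in (0 : ℝ)..x, h t) μ := by
  refine (hμ.const_mul M).mono'
    (intervalIntegral.continuous_primitive hh 0).aestronglyMeasurable (ae_of_all _ fun x => ?_)
  simpa only [sub_zero] using
    intervalIntegral.norm_integral_le_of_norm_le_const (a := 0) (b := x) fun t _ => hM t

end Subgradient

section Clamp

/-- The truncation of `x` to the interval `[-r, r]`, meant for `0 ≤ r`. Unlike cutting off to `0`
outside the interval, it is monotone and continuous in `x`. -/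
def clamp (r x : ℝ) : ℝ := max (-r) (min r x)

variable {r x : ℝ}

theorem monotone_clamp (r : ℝ) : Monotone (clamp r) :=
  fun _ _ hxy => max_le_max le_rfl (min_le_min le_rfl hxy)

theorem continuous_clamp (r : ℝ) : Continuous (clamp r) := by
  unfold clamp
  fun_prop

theorem abs_clamp_le (hr : 0 ≤ r) (x : ℝ) : |clamp r x| ≤ r :=
  abs_le.2 ⟨le_max_left _ _, max_le (by linarith) (min_le_left _ _)⟩

theorem clamp_of_abs_le (hx : |x| ≤ r) : clamp r x = x := by
  rw [clamp, min_eq_right (abs_le.1 hx).2, max_eq_right (abs_le.1 hx).1]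

theorem clamp_mem_uIcc_zero (hr : 0 ≤ r) (x : ℝ) : clamp r x ∈ uIcc 0 x := by
  rw [clamp, mem_uIcc]
  grind

theorem clamp_mul_le (hr : 0 ≤ r) (x y : ℝ) : clamp r x * y ≤ max 0 (x * y) := by
  have h_mem : clamp r x * y ∈ uIcc (0 * y) (x * y) :=
    image_mul_const_uIcc y 0 x ▸ mem_image_of_mem (· * y) (clamp_mem_uIcc_zero hr x)
  simpa only [zero_mul] using h_mem.2

theorem integral_nonneg_of_forall_integral_clamp_mul_nonneg {Ω : Type*} [MeasurableSpace Ω]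
    {P : Measure Ω} {s d D : Ω → ℝ} (hs : AEStronglyMeasurable s P) (hd : Integrable d P)
    (hD : Integrable D P) (h_le : ∀ᵐ ω ∂P, s ω * d ω ≤ D ω)
    (h_nonneg : ∀ n : ℕ, 0 ≤ ∫ ω, clamp n (s ω) * d ω ∂P) : 0 ≤ ∫ ω, D ω ∂P := by
  have h_int (n : ℕ) : Integrable (fun ω => clamp n (s ω) * d ω) P :=
    hd.bdd_mul ((continuous_clamp n).comp_aestronglyMeasurable hs)
      (ae_of_all _ fun ω => abs_clamp_le n.cast_nonneg (s ω))
  -- `clamp n (s ω) * d ω` is only bounded above by an integrable function; taking the maximum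
  -- with `D ω` makes dominated convergence applicable.
  have h_lim : Tendsto (fun n : ℕ => ∫ ω, max (clamp n (s ω) * d ω) (D ω) ∂P) atTop
      (𝓝 (∫ ω, D ω ∂P)) := by
    refine tendsto_integral_of_dominated_convergence (fun ω => |D ω|)
      (fun n => ((h_int n).sup hD).aestronglyMeasurable) hD.abs (fun n => ?_) ?_
    · filter_upwards [h_le] with ω hω
      have h_clamp := clamp_mul_le n.cast_nonneg (s ω) (d ω)
      exact abs_le.2 ⟨(neg_abs_le _).trans (le_max_right _ _), max_le
        (h_clamp.trans (max_le (abs_nonneg _) (hω.trans (le_abs_self _)))) (le_abs_self _)⟩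
    · filter_upwards [h_le] with ω hω
      refine tendsto_const_nhds.congr' ?_
      filter_upwards [tendsto_natCast_atTop_atTop.eventually_ge_atTop |s ω|] with n hn
      rw [clamp_of_abs_le hn, max_eq_right hω]
  exact ge_of_tendsto' h_lim fun n => (h_nonneg n).trans <|
    integral_mono (h_int n) ((h_int n).sup hD) fun ω => le_max_left _ _

end Clamp

section Quantile

variable (μ ν : Measure ℝ) [IsProbabilityMeasure μ] [IsProbabilityMeasure ν] {u : ℝ}

theorem isLeast_quantile (hu : u ∈ Ioo (0 : ℝ) 1) :
    IsLeast {y | u ≤ cdf μ y} (quantile μ u) := by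
  have h_eq : quantile μ u = sInf {y | u ≤ cdf μ y} := by
    simp only [quantile, ← ofReal_cdf, ENNReal.ofReal_le_ofReal_iff (cdf_nonneg μ _)]
  have h_bdd : BddBelow {y | u ≤ cdf μ y} := by
    obtain ⟨a, ha⟩ := ((tendsto_cdf_atBot μ).eventually_lt_const hu.1).exists
    exact ⟨a, fun y hy => ((monotone_cdf μ).reflect_lt (ha.trans_le hy)).le⟩
  have h_nonempty : {y | u ≤ cdf μ y}.Nonempty :=
    ((tendsto_cdf_atTop μ).eventually_const_le hu.2).exists
  rw [h_eq]
  refine ⟨?_, fun y hy => csInf_le h_bdd hy⟩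
  rw [mem_ofPred_eq, ← (cdf μ).iInf_Ioi_eq]
  refine le_ciInf fun z => ?_
  obtain ⟨y, hy, hyz⟩ := exists_lt_of_csInf_lt h_nonempty z.2
  exact hy.trans (monotone_cdf μ hyz.le)

theorem quantile_le_iff (hu : u ∈ Ioo (0 : ℝ) 1) (y : ℝ) : quantile μ u ≤ y ↔ u ≤ cdf μ y :=
  ⟨fun h => (isLeast_quantile μ hu).1.trans (monotone_cdf μ h),
    fun h => (isLeast_quantile μ hu).2 h⟩

theorem lt_quantile_iff (hu : u ∈ Ioo (0 : ℝ) 1) (y : ℝ) : y < quantile μ u ↔ cdf μ y < u := by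
  simpa only [not_le] using (quantile_le_iff μ hu y).not

theorem monotoneOn_quantile : MonotoneOn (quantile μ) (Ioo 0 1) := fun _ hu _ hv huv =>
  (quantile_le_iff μ hu _).2 (huv.trans (isLeast_quantile μ hv).1)

theorem tendsto_quantile_nhdsLT_nhdsLE (hu : u ∈ Ioo (0 : ℝ) 1) :
    Tendsto (quantile μ) (𝓝[<] u) (𝓝[≤] quantile μ u) := by
  have h_le : ∀ᶠ v in 𝓝[<] u, quantile μ v ≤ quantile μ u := by
    filter_upwards [Ioo_mem_nhdsLT hu.1] with v hv
    exact monotoneOn_quantile μ ⟨hv.1, hv.2.trans hu.2⟩ hu hv.2.le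
  refine tendsto_nhdsWithin_iff.2 ⟨tendsto_order.2 ⟨fun y hy => ?_, fun y hy => ?_⟩, h_le⟩
  · filter_upwards [Ioo_mem_nhdsLT ((lt_quantile_iff μ hu y).1 hy)] with v hv
    exact (lt_quantile_iff μ ⟨(cdf_nonneg μ y).trans_lt hv.1, hv.2.trans hu.2⟩ y).2 hv.1
  · filter_upwards [h_le] with v hv using hv.trans_lt hy

theorem aemeasurable_quantile : AEMeasurable (quantile μ) (volume.restrict (Ioo 0 1)) :=
  aemeasurable_restrict_of_monotoneOn measurableSet_Ioo (monotoneOn_quantile μ)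

theorem map_quantile_volume : (volume.restrict (Ioo 0 1)).map (quantile μ) = μ := by
  have : IsFiniteMeasure ((volume.restrict (Ioo 0 1)).map (quantile μ)) :=
    Measure.isFiniteMeasure_map _ _
  refine Measure.ext_of_Iic _ _ fun y => ?_
  have h_preimage : quantile μ ⁻¹' Iic y =ᵐ[volume.restrict (Ioo 0 1)] Iic (cdf μ y) := by
    filter_upwards [ae_restrict_mem measurableSet_Ioo] with u hu
    exact propext (quantile_le_iff μ hu y)
  rw [Measure.map_apply_of_aemeasurable (aemeasurable_quantile μ) measurableSet_Iic,
    measure_congr h_preimage, restrict_Ioo_eq_restrict_Ioc,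
    Measure.restrict_apply measurableSet_Iic, inter_comm, Ioc_inter_Iic,
    inf_eq_right.2 (cdf_le_one μ y), Real.volume_Ioc, sub_zero, ofReal_cdf]

variable {μ ν} {f : ℝ → ℝ}

theorem integrableOn_comp_quantile (hf : Integrable f μ) :
    IntegrableOn (fun u => f (quantile μ u)) (Ioo 0 1) := by
  rw [← map_quantile_volume μ] at hf
  exact hf.comp_aemeasurable (aemeasurable_quantile μ)

theorem setIntegral_comp_quantile (hf : AEStronglyMeasurable f μ) :
    ∫ u in Ioo 0 1, f (quantile μ u) = ∫ x, f x ∂μ := by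
  rw [← map_quantile_volume μ] at hf
  rw [← integral_map (aemeasurable_quantile μ) hf, map_quantile_volume μ]

theorem integrableOn_quantile (hμ : Integrable (fun x => |x|) μ) :
    IntegrableOn (quantile μ) (Ioo 0 1) :=
  integrableOn_comp_quantile ((integrable_norm_iff measurable_id.aestronglyMeasurable).1 hμ)

theorem setIntegral_comp_quantile_sub (hfμ : Integrable f μ) (hfν : Integrable f ν) :
    ∫ u in Ioo 0 1, (f (quantile ν u) - f (quantile μ u)) = ∫ x, f x ∂ν - ∫ x, f x ∂μ := by
  rw [integral_sub (integrableOn_comp_quantile hfν) (integrableOn_comp_quantile hfμ),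
    setIntegral_comp_quantile hfν.aestronglyMeasurable,
    setIntegral_comp_quantile hfμ.aestronglyMeasurable]

theorem isSubgradientAt_primitive_comp_cdf {g : ℝ → ℝ} (hg : Monotone g)
    (hu : u ∈ Ioo (0 : ℝ) 1) (a : ℝ) :
    IsSubgradientAt (fun y => ∫ t in a..y, g (cdf ν t)) (g u) (quantile ν u) :=
  isSubgradientAt_primitive (fun _ _ => (hg.comp (monotone_cdf ν)).intervalIntegrable)
    (fun t ht => hg ((lt_quantile_iff ν hu t).1 ht).le)
    fun t ht => hg ((quantile_le_iff ν hu t).1 ht.le)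

end Quantile

section ConvexOrder

variable {μ ν : Measure ℝ} [IsProbabilityMeasure μ] [IsProbabilityMeasure ν]

theorem ConvexOrder.setIntegral_mul_quantile_sub_nonneg (h : ConvexOrder μ ν)
    (hμ : Integrable (fun x => |x|) μ) (hν : Integrable (fun x => |x|) ν) {g : ℝ → ℝ}
    (hg : Monotone g) : 0 ≤ ∫ u in Ioo 0 1, g u * (quantile ν u - quantile μ u) := by
  have h_bound {v : ℝ} (h₀ : 0 ≤ v) (h₁ : v ≤ 1) : |g v| ≤ max |g 0| |g 1| :=
    abs_le_max_abs_abs (hg h₀) (hg h₁)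
  have h_mono : Monotone fun t => g (cdf ν t) := hg.comp (monotone_cdf ν)
  set f : ℝ → ℝ := fun x => ∫ t in (0 : ℝ)..x, g (cdf ν t)
  have h_integrable {α : Measure ℝ} (hα : Integrable (fun x => |x|) α) : Integrable f α :=
    integrable_primitive_of_bounded hα (fun _ _ => h_mono.intervalIntegrable)
      fun t => h_bound (cdf_nonneg ν t) (cdf_le_one ν t)
  have h_prod : IntegrableOn (fun u => g u * (quantile ν u - quantile μ u)) (Ioo 0 1) :=
    ((integrableOn_quantile hν).sub (integrableOn_quantile hμ)).bdd_mul
      hg.measurable.aestronglyMeasurable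
      (ae_restrict_of_forall_mem measurableSet_Ioo fun u hu => h_bound hu.1.le hu.2.le)
  calc 0 ≤ ∫ x, f x ∂ν - ∫ x, f x ∂μ :=
        sub_nonneg.2 (h f (convexOn_primitive_of_monotone h_mono 0)
          (h_integrable hμ) (h_integrable hν))
    _ = ∫ u in Ioo 0 1, (f (quantile ν u) - f (quantile μ u)) :=
        (setIntegral_comp_quantile_sub (h_integrable hμ) (h_integrable hν)).symm
    _ ≤ ∫ u in Ioo 0 1, g u * (quantile ν u - quantile μ u) := by
        refine setIntegral_mono_on ((integrableOn_comp_quantile (h_integrable hν)).sub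
          (integrableOn_comp_quantile (h_integrable hμ))) h_prod measurableSet_Ioo fun u hu => ?_
        linarith [isSubgradientAt_primitive_comp_cdf (ν := ν) hg hu 0 (quantile μ u)]

theorem integral_le_integral_of_forall_setIntegral_clamp_mul_nonneg
    (hμ : Integrable (fun x => |x|) μ) (hν : Integrable (fun x => |x|) ν) {f s : ℝ → ℝ}
    (hfμ : Integrable f μ) (hfν : Integrable f ν) (hs : Measurable s)
    (h_sub : ∀ x, IsSubgradientAt f (s x) x)
    (h_nonneg : ∀ n : ℕ,
      0 ≤ ∫ u in Ioo 0 1, clamp n (s (quantile μ u)) * (quantile ν u - quantile μ u)) :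
    ∫ x, f x ∂μ ≤ ∫ x, f x ∂ν := by
  rw [← sub_nonneg, ← setIntegral_comp_quantile_sub hfμ hfν]
  exact integral_nonneg_of_forall_integral_clamp_mul_nonneg
    (hs.comp_aemeasurable (aemeasurable_quantile μ)).aestronglyMeasurable
    ((integrableOn_quantile hν).sub (integrableOn_quantile hμ))
    ((integrableOn_comp_quantile hfν).sub (integrableOn_comp_quantile hfμ))
    (ae_of_all _ fun u => h_sub (quantile μ u) (quantile ν u)) h_nonneg

end ConvexOrder

theorem stmt16 (μ ν : Measure ℝ)
    [IsProbabilityMeasure μ] [IsProbabilityMeasure ν]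
    (hμ : Integrable (fun x => |x|) μ) (hν : Integrable (fun y => |y|) ν) :
    ConvexOrder μ ν ↔
      ∀ g : ℝ → ℝ,
        (∃ M : ℝ, ∀ u ∈ Set.Ioo (0 : ℝ) 1, |g u| ≤ M) →
        MonotoneOn g (Set.Ioo (0 : ℝ) 1) →
        (∀ u ∈ Set.Ioo (0 : ℝ) 1, ContinuousWithinAt g (Set.Iio u) u) →
        0 ≤ ∫ u in (0 : ℝ)..1, g u * (quantile ν u - quantile μ u) := by
  simp_rw [intervalIntegral.integral_of_le zero_le_one, integral_Ioc_eq_integral_Ioo]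
  constructor
  · rintro h g ⟨M, hM⟩ hg -
    obtain ⟨G, hG, hgG⟩ := hg.exists_monotone_extension
      ⟨-M, forall_mem_image.2 fun u hu => (abs_le.1 (hM u hu)).1⟩
      ⟨M, forall_mem_image.2 fun u hu => (abs_le.1 (hM u hu)).2⟩
    refine (h.setIntegral_mul_quantile_sub_nonneg hμ hν hG).trans_eq ?_
    exact setIntegral_congr_fun measurableSet_Ioo fun u hu => by simp only [hgG hu]
  · intro h f hf hfμ hfν
    obtain ⟨s, hs_mono, hs_left, hs_sub⟩ := exists_monotone_leftContinuous_isSubgradientAt hf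
    refine integral_le_integral_of_forall_setIntegral_clamp_mul_nonneg hμ hν hfμ hfν
      hs_mono.measurable hs_sub fun n => h (fun u => clamp n (s (quantile μ u))) ?_ ?_ ?_
    · exact ⟨n, fun u _ => abs_clamp_le n.cast_nonneg _⟩
    · exact ((monotone_clamp n).comp hs_mono).comp_monotoneOn (monotoneOn_quantile μ)
    · exact fun u hu => ((continuous_clamp n).tendsto _).comp
        ((hs_left _).tendsto.comp (tendsto_quantile_nhdsLT_nhdsLE μ hu))
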